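/- Let n, Π be positive integers with Π dividing n, let A be a fixed n×n real matrix, let E be a fixed n×n diagonal matrix all of whose diagonal entries are 0 or 1, and let φ > 0. Using one common choice of the random functions P₁, P₂, s₁, s₂, form the Cartesian sketches Cart(EA) and Cart(AE). Then for any fixed bucket (h, g) ∈ {1,…,Π}², the probability that both |Cart(EA)_{h,g}| < φ/4 and |Cart(AE)_{h,g}| < φ/4 is at least 1 − 32·‖A‖_F²/(Π²·φ²). -/

import Mathlib

open ProbabilityTheory MeasureTheory
open scoped ENNReal

/-- A function `f : Fin n → Fin K` is an equipartition if every fiber has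
cardinality exactly `n / K`. -/
def IsEquip (n K : ℕ) (f : Fin n → Fin K) : Prop :=
  ∀ b : Fin K, (Finset.univ.filter fun a => f a = b).card = n / K

/-- The `(h, g)` bucket of the Cartesian sketch of the matrix `A`, as a function of the
outcome `ω = (P₁, P₂, s₁, s₂)`:
`Cart(A)_{h,g} = ∑_{P₁ x = h} ∑_{P₂ y = g} s₁ x · s₂ y · A x y`. -/
def cartEntry (n K : ℕ) (A : Matrix (Fin n) (Fin n) ℝ) (h g : Fin K)
    (ω : (Fin n → Fin K) × (Fin n → Fin K) × (Fin n → ℝ) × (Fin n → ℝ)) : ℝ :=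
  ∑ x, ∑ y, if ω.1 x = h ∧ ω.2.1 y = g then ω.2.2.1 x * ω.2.2.2 y * A x y else 0

/-- The joint law of `(P₁, P₂, s₁, s₂)`: `P₁, P₂` are independent uniform random
equipartitions, and `s₁, s₂` are random sign functions with laws `σ₁, σ₂`, all four
mutually independent. -/
noncomputable def sketchMeasure (n K : ℕ) (σ₁ σ₂ : Measure (Fin n → ℝ)) :
    Measure ((Fin n → Fin K) × (Fin n → Fin K) × (Fin n → ℝ) × (Fin n → ℝ)) :=
  (uniformOn {f | IsEquip n K f}).prod
    ((uniformOn {f | IsEquip n K f}).prod (σ₁.prod σ₂))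

section Equipartition

variable {n K : ℕ}

lemma IsEquip.comp_perm {f : Fin n → Fin K} (hf : IsEquip n K f) (e : Equiv.Perm (Fin n)) :
    IsEquip n K (f ∘ e) := by
  intro b
  rw [← hf b]
  exact Finset.card_bijective e e.bijective (by simp)

lemma exists_isEquip (hK : 0 < K) (hdvd : K ∣ n) : ∃ f, IsEquip n K f := by
  obtain ⟨m, rfl⟩ := hdvd
  refine ⟨fun a => (finProdFinEquiv.symm a).1, fun b => ?_⟩
  rw [Nat.mul_div_cancel_left m hK]
  have hcard := Finset.card_bijective (s := ({b} : Finset (Fin K)) ×ˢ (Finset.univ : Finset (Fin m)))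
    (t := Finset.univ.filter fun a : Fin (K * m) => (finProdFinEquiv.symm a).1 = b)
    finProdFinEquiv finProdFinEquiv.bijective (fun p => by
      rw [Finset.mem_filter, Equiv.symm_apply_apply, Finset.mem_product]
      simp)
  rw [← hcard]
  simp

lemma isProbabilityMeasure_uniformOn_isEquip (hK : 0 < K) (hdvd : K ∣ n) :
    IsProbabilityMeasure (uniformOn {f | IsEquip n K f}) :=
  isProbabilityMeasure_uniformOn (Set.toFinite _) (exists_isEquip hK hdvd)

lemma uniformOn_isEquip_apply_eq (h : Fin K) (x y : Fin n) :
    uniformOn {f | IsEquip n K f} {f | f x = h} = uniformOn {f | IsEquip n K f} {f | f y = h} := by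
  have hbij : Function.Bijective fun f : Fin n → Fin K => f ∘ Equiv.swap x y :=
    ((Equiv.swap x y).arrowCongr (Equiv.refl (Fin K))).bijective
  have hpre : {f | IsEquip n K f} ∩ {f | f x = h} = (fun f : Fin n → Fin K => f ∘ Equiv.swap x y) ⁻¹'
      ({f | IsEquip n K f} ∩ {f | f y = h}) := by
    ext f
    simp only [Set.mem_inter_iff, Set.mem_ofPred_eq, Set.mem_preimage, Function.comp_apply,
      Equiv.swap_apply_right]
    refine and_congr_left fun _ => ⟨fun hf => hf.comp_perm _, fun hf => ?_⟩
    simpa [Function.comp_assoc, ← Equiv.coe_trans] using hf.comp_perm (Equiv.swap x y)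
  rw [uniformOn, cond_apply (Set.toFinite _).measurableSet, cond_apply (Set.toFinite _).measurableSet,
    Measure.count_apply (Set.toFinite ({f | IsEquip n K f} ∩ {f | f x = h})).measurableSet,
    Measure.count_apply (Set.toFinite ({f | IsEquip n K f} ∩ {f | f y = h})).measurableSet,
    hpre, Set.encard_preimage_of_bijective hbij]

/-- A uniform random equipartition puts a given point in a given class with probability `1 / K`. -/
lemma uniformOn_isEquip_real_apply (hK : 0 < K) (hdvd : K ∣ n) (h : Fin K) (x : Fin n) :
    (uniformOn {f | IsEquip n K f}).real {f | f x = h} = 1 / K := by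
  have := isProbabilityMeasure_uniformOn_isEquip hK hdvd
  set μ := uniformOn {f | IsEquip n K f} with hμ
  have hn : (n : ℝ) ≠ 0 := by
    have := x.pos
    positivity
  have hsum : ∑ y, μ.real {f | f y = h} = n / K := by
    calc ∑ y, μ.real {f | f y = h}
        = ∑ y, ∫ f, (if f y = h then (1 : ℝ) else 0) ∂μ := by
          refine Finset.sum_congr rfl fun y _ => ?_
          rw [← integral_indicator_one (Set.toFinite _).measurableSet]
          simp [Set.indicator_apply]
      _ = ∫ f, ∑ y, (if f y = h then (1 : ℝ) else 0) ∂μ :=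
          (integral_finsetSum _ fun _ _ => Integrable.of_finite).symm
      _ = ∫ _, (n / K : ℝ) ∂μ := by
          refine integral_congr_ae ?_
          filter_upwards [ae_cond_mem (Set.toFinite {f | IsEquip n K f}).measurableSet] with f hf
          rw [Finset.sum_boole, hf h, Nat.cast_div hdvd (by positivity)]
      _ = n / K := by simp
  rw [Finset.sum_congr rfl fun y _ => show μ.real {f | f y = h} = μ.real {f | f x = h} by
    rw [measureReal_def, measureReal_def, hμ, uniformOn_isEquip_apply_eq h y x]] at hsum
  rw [Finset.sum_const, Finset.card_univ, Fintype.card_fin, nsmul_eq_mul] at hsum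
  apply mul_left_cancel₀ hn
  rw [hsum]
  ring

end Equipartition

section Signs

variable {ι : Type*} {σ : Measure (ι → ℝ)} [IsProbabilityMeasure σ]

lemma integrable_sign_mul_sign (hval : ∀ᵐ s ∂σ, ∀ i, s i = 1 ∨ s i = -1) (i j : ι) :
    Integrable (fun s => s i * s j) σ := by
  refine Integrable.of_bound (by fun_prop) 1 ?_
  filter_upwards [hval] with s hs
  rcases hs i with hi | hi <;> rcases hs j with hj | hj <;> simp [hi, hj]

lemma integral_sign_mul_sign [DecidableEq ι] (hval : ∀ᵐ s ∂σ, ∀ i, s i = 1 ∨ s i = -1)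
    (hpair : ∀ i j : ι, i ≠ j → ∀ a b : ℝ, (a = 1 ∨ a = -1) → (b = 1 ∨ b = -1) →
      σ {s | s i = a ∧ s j = b} = 1 / 4) (i j : ι) :
    ∫ s, s i * s j ∂σ = if i = j then 1 else 0 := by
  split_ifs with hij
  · subst hij
    rw [integral_congr_ae (g := fun _ => (1 : ℝ))]
    · simp
    · filter_upwards [hval] with s hs
      rcases hs i with hi | hi <;> simp [hi]
  · have hmeas (a b : ℝ) : MeasurableSet {s : ι → ℝ | s i = a ∧ s j = b} :=
      (measurableSet_eq_fun (measurable_pi_apply i) measurable_const).inter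
        (measurableSet_eq_fun (measurable_pi_apply j) measurable_const)
    have hintegrable (a b : ℝ) : Integrable ({s : ι → ℝ | s i = a ∧ s j = b}.indicator (1 : (ι → ℝ) → ℝ)) σ :=
      (integrable_const (1 : ℝ)).indicator (hmeas a b)
    have hprob (a b : ℝ) (ha : a = 1 ∨ a = -1) (hb : b = 1 ∨ b = -1) :
        ∫ s, {s : ι → ℝ | s i = a ∧ s j = b}.indicator (1 : (ι → ℝ) → ℝ) s ∂σ = 1 / 4 := by
      rw [integral_indicator_one (hmeas a b), measureReal_def, hpair i j hij a b ha hb]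
      simp
    have hdecomp : (fun s : ι → ℝ => s i * s j) =ᵐ[σ] fun s =>
        ({s : ι → ℝ | s i = 1 ∧ s j = 1}.indicator (1 : (ι → ℝ) → ℝ) s
          + {s : ι → ℝ | s i = -1 ∧ s j = -1}.indicator (1 : (ι → ℝ) → ℝ) s)
        - ({s : ι → ℝ | s i = 1 ∧ s j = -1}.indicator (1 : (ι → ℝ) → ℝ) s
          + {s : ι → ℝ | s i = -1 ∧ s j = 1}.indicator (1 : (ι → ℝ) → ℝ) s) := by
      filter_upwards [hval] with s hs
      rcases hs i with hi | hi <;> rcases hs j with hj | hj <;>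
        norm_num [hi, hj, Set.indicator_apply]
    rw [integral_congr_ae hdecomp, integral_sub ((hintegrable _ _).fun_add (hintegrable _ _))
      ((hintegrable _ _).fun_add (hintegrable _ _)), integral_add (hintegrable _ _) (hintegrable _ _),
      integral_add (hintegrable _ _) (hintegrable _ _)]
    simp [hprob]

end Signs

section SecondMoment

variable {n K : ℕ}

lemma cartEntry_sq (B : Matrix (Fin n) (Fin n) ℝ) (h g : Fin K)
    (ω : (Fin n → Fin K) × (Fin n → Fin K) × (Fin n → ℝ) × (Fin n → ℝ)) :
    cartEntry n K B h g ω ^ 2 = ∑ x, ∑ y, ∑ x', ∑ y', B x y * B x' y' *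
      ((if ω.1 x = h ∧ ω.1 x' = h then 1 else 0) *
        ((if ω.2.1 y = g ∧ ω.2.1 y' = g then 1 else 0) *
          ((ω.2.2.1 x * ω.2.2.1 x') * (ω.2.2.2 y * ω.2.2.2 y')))) := by
  simp only [cartEntry, sq, Finset.sum_mul, Finset.mul_sum]
  refine Finset.sum_congr rfl fun x _ => Finset.sum_congr rfl fun y _ =>
    Finset.sum_congr rfl fun x' _ => Finset.sum_congr rfl fun y' _ => ?_
  by_cases h₁ : ω.1 x = h <;> by_cases h₂ : ω.1 x' = h <;> by_cases h₃ : ω.2.1 y = g <;>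
    by_cases h₄ : ω.2.1 y' = g <;> simp [h₁, h₂, h₃, h₄]
  ring

variable {σ₁ σ₂ : Measure (Fin n → ℝ)} [IsProbabilityMeasure σ₁] [IsProbabilityMeasure σ₂]

lemma integrable_cartEntry_sq_term (hK : 0 < K) (hdvd : K ∣ n)
    (hval₁ : ∀ᵐ s ∂σ₁, ∀ i, s i = 1 ∨ s i = -1)
    (hval₂ : ∀ᵐ s ∂σ₂, ∀ i, s i = 1 ∨ s i = -1)
    (h g : Fin K) (c : ℝ) (x y x' y' : Fin n) :
    Integrable (fun ω => c *
      ((if ω.1 x = h ∧ ω.1 x' = h then 1 else 0) *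
        ((if ω.2.1 y = g ∧ ω.2.1 y' = g then 1 else 0) *
          ((ω.2.2.1 x * ω.2.2.1 x') * (ω.2.2.2 y * ω.2.2.2 y')))))
      (sketchMeasure n K σ₁ σ₂) := by
  have := isProbabilityMeasure_uniformOn_isEquip hK hdvd
  refine Integrable.const_mul ?_ c
  exact Integrable.mul_prod (f := fun p : Fin n → Fin K => if p x = h ∧ p x' = h then (1 : ℝ) else 0)
    Integrable.of_finite (Integrable.mul_prod
      (f := fun p : Fin n → Fin K => if p y = g ∧ p y' = g then (1 : ℝ) else 0)
      Integrable.of_finite (Integrable.mul_prod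
        (integrable_sign_mul_sign hval₁ x x') (integrable_sign_mul_sign hval₂ y y')))

lemma integrable_cartEntry_sq (hK : 0 < K) (hdvd : K ∣ n)
    (hval₁ : ∀ᵐ s ∂σ₁, ∀ i, s i = 1 ∨ s i = -1)
    (hval₂ : ∀ᵐ s ∂σ₂, ∀ i, s i = 1 ∨ s i = -1)
    (B : Matrix (Fin n) (Fin n) ℝ) (h g : Fin K) :
    Integrable (fun ω => cartEntry n K B h g ω ^ 2) (sketchMeasure n K σ₁ σ₂) := by
  simp only [cartEntry_sq]
  exact integrable_finsetSum _ fun x _ => integrable_finsetSum _ fun y _ =>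
    integrable_finsetSum _ fun x' _ => integrable_finsetSum _ fun y' _ =>
      integrable_cartEntry_sq_term hK hdvd hval₁ hval₂ h g _ x y x' y'

/-- The second moment of a bucket of the Cartesian sketch is `‖B‖_F² / K²`. -/
lemma integral_cartEntry_sq (hK : 0 < K) (hdvd : K ∣ n)
    (hval₁ : ∀ᵐ s ∂σ₁, ∀ i, s i = 1 ∨ s i = -1)
    (hval₂ : ∀ᵐ s ∂σ₂, ∀ i, s i = 1 ∨ s i = -1)
    (hpair₁ : ∀ i j : Fin n, i ≠ j → ∀ a b : ℝ, (a = 1 ∨ a = -1) → (b = 1 ∨ b = -1) →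
      σ₁ {s | s i = a ∧ s j = b} = 1 / 4)
    (hpair₂ : ∀ i j : Fin n, i ≠ j → ∀ a b : ℝ, (a = 1 ∨ a = -1) → (b = 1 ∨ b = -1) →
      σ₂ {s | s i = a ∧ s j = b} = 1 / 4)
    (B : Matrix (Fin n) (Fin n) ℝ) (h g : Fin K) :
    ∫ ω, cartEntry n K B h g ω ^ 2 ∂(sketchMeasure n K σ₁ σ₂) =
      (∑ x, ∑ y, B x y ^ 2) / K ^ 2 := by
  have := isProbabilityMeasure_uniformOn_isEquip hK hdvd
  have hterm := integrable_cartEntry_sq_term hK hdvd hval₁ hval₂ h g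
  have hbucket (b : Fin K) (x : Fin n) :
      ∫ p, (if p x = b then (1 : ℝ) else 0) ∂(uniformOn {f | IsEquip n K f}) = 1 / K := by
    rw [← uniformOn_isEquip_real_apply hK hdvd b x,
      ← integral_indicator_one (Set.toFinite _).measurableSet]
    simp [Set.indicator_apply]
  have hvalue (c : ℝ) (x y x' y' : Fin n) : ∫ ω, c *
      ((if ω.1 x = h ∧ ω.1 x' = h then 1 else 0) *
        ((if ω.2.1 y = g ∧ ω.2.1 y' = g then 1 else 0) *
          ((ω.2.2.1 x * ω.2.2.1 x') * (ω.2.2.2 y * ω.2.2.2 y'))))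
      ∂(sketchMeasure n K σ₁ σ₂) = if x = x' then if y = y' then c / K ^ 2 else 0 else 0 := by
    rw [integral_const_mul, sketchMeasure,
      integral_prod_mul (fun p : Fin n → Fin K => if p x = h ∧ p x' = h then (1 : ℝ) else 0)
        (fun w : (Fin n → Fin K) × (Fin n → ℝ) × (Fin n → ℝ) =>
          (if w.1 y = g ∧ w.1 y' = g then 1 else 0) *
            ((w.2.1 x * w.2.1 x') * (w.2.2 y * w.2.2 y'))),
      integral_prod_mul (fun p : Fin n → Fin K => if p y = g ∧ p y' = g then (1 : ℝ) else 0)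
        (fun w : (Fin n → ℝ) × (Fin n → ℝ) => (w.1 x * w.1 x') * (w.2 y * w.2 y')),
      integral_prod_mul (fun s : Fin n → ℝ => s x * s x') (fun s : Fin n → ℝ => s y * s y'),
      integral_sign_mul_sign hval₁ hpair₁, integral_sign_mul_sign hval₂ hpair₂]
    split_ifs with hx hy
    · subst hx hy
      simp only [and_self, hbucket]
      ring
    all_goals simp
  simp only [cartEntry_sq]
  rw [integral_finsetSum _ fun x _ => integrable_finsetSum _ fun y _ =>
    integrable_finsetSum _ fun x' _ => integrable_finsetSum _ fun y' _ => hterm _ x y x' y',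
    Finset.sum_div]
  refine Finset.sum_congr rfl fun x _ => ?_
  rw [integral_finsetSum _ fun y _ =>
    integrable_finsetSum _ fun x' _ => integrable_finsetSum _ fun y' _ => hterm _ x y x' y',
    Finset.sum_div]
  refine Finset.sum_congr rfl fun y _ => ?_
  rw [integral_finsetSum _ fun x' _ => integrable_finsetSum _ fun y' _ => hterm _ x y x' y']
  simp only [integral_finsetSum _ fun y' _ => hterm _ x y _ y', hvalue]
  simp [sq]

/-- Chebyshev bound for one bucket, monotone in the Frobenius norm. -/
lemma sketchMeasure_le_abs_cartEntry (hK : 0 < K) (hdvd : K ∣ n)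
    (hval₁ : ∀ᵐ s ∂σ₁, ∀ i, s i = 1 ∨ s i = -1)
    (hval₂ : ∀ᵐ s ∂σ₂, ∀ i, s i = 1 ∨ s i = -1)
    (hpair₁ : ∀ i j : Fin n, i ≠ j → ∀ a b : ℝ, (a = 1 ∨ a = -1) → (b = 1 ∨ b = -1) →
      σ₁ {s | s i = a ∧ s j = b} = 1 / 4)
    (hpair₂ : ∀ i j : Fin n, i ≠ j → ∀ a b : ℝ, (a = 1 ∨ a = -1) → (b = 1 ∨ b = -1) →
      σ₂ {s | s i = a ∧ s j = b} = 1 / 4)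
    {A B : Matrix (Fin n) (Fin n) ℝ} (hBA : ∀ x y, B x y ^ 2 ≤ A x y ^ 2) (h g : Fin K)
    {φ : ℝ} (hφ : 0 < φ) :
    sketchMeasure n K σ₁ σ₂ {ω | φ / 4 ≤ |cartEntry n K B h g ω|} ≤
      ENNReal.ofReal (16 * (∑ x, ∑ y, A x y ^ 2) / (K ^ 2 * φ ^ 2)) := by
  have := isProbabilityMeasure_uniformOn_isEquip hK hdvd
  have : IsProbabilityMeasure (sketchMeasure n K σ₁ σ₂) := by
    unfold sketchMeasure
    infer_instance
  have hmarkov := mul_meas_ge_le_integral_of_nonneg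
    (Filter.Eventually.of_forall fun ω => sq_nonneg (cartEntry n K B h g ω))
    (integrable_cartEntry_sq hK hdvd hval₁ hval₂ B h g) ((φ / 4) ^ 2)
  rw [integral_cartEntry_sq hK hdvd hval₁ hval₂ hpair₁ hpair₂ B h g] at hmarkov
  have hset : {ω | φ / 4 ≤ |cartEntry n K B h g ω|} =
      {ω | (φ / 4) ^ 2 ≤ cartEntry n K B h g ω ^ 2} := by
    ext ω
    rw [Set.mem_ofPred_eq, Set.mem_ofPred_eq, sq_le_sq, abs_of_pos (by positivity : 0 < φ / 4)]
  have hfrob : ∑ x, ∑ y, B x y ^ 2 ≤ ∑ x, ∑ y, A x y ^ 2 :=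
    Finset.sum_le_sum fun x _ => Finset.sum_le_sum fun y _ => hBA x y
  rw [hset, ← ofReal_measureReal]
  refine ENNReal.ofReal_le_ofReal ?_
  have hK' : (0 : ℝ) < K := by exact_mod_cast hK
  replace hmarkov := hmarkov.trans (div_le_div_of_nonneg_right hfrob (by positivity))
  rw [le_div_iff₀ (by positivity)] at hmarkov ⊢
  linarith

end SecondMoment

/-- Let `A` be a fixed `n × n` matrix and `E = diagonal d` a fixed
masking matrix (each `d i` is `0` or `1`).  Using one common choice of the random
functions `P₁, P₂, s₁, s₂`, form the Cartesian sketches `Cart(E·A)` and `Cart(A·E)`.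
For any fixed bucket `(h, g)` and `φ > 0`, with probability at least
`1 − 32‖A‖_F²/(K²φ²)` both bucket values have magnitude less than `φ/4`. -/
theorem cart_sketch_masked_small_error (n K : ℕ) (hn : 0 < n) (hK : 0 < K) (hdvd : K ∣ n)
    (A : Matrix (Fin n) (Fin n) ℝ) (d : Fin n → ℝ) (hd : ∀ i, d i = 0 ∨ d i = 1)
    (φ : ℝ) (hφ : 0 < φ)
    (σ₁ σ₂ : Measure (Fin n → ℝ)) [IsProbabilityMeasure σ₁] [IsProbabilityMeasure σ₂]
    (hval₁ : ∀ᵐ s ∂σ₁, ∀ i, s i = 1 ∨ s i = -1)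
    (hval₂ : ∀ᵐ s ∂σ₂, ∀ i, s i = 1 ∨ s i = -1)
    (huni₁ : ∀ i, σ₁ {s | s i = 1} = 1 / 2)
    (huni₂ : ∀ i, σ₂ {s | s i = 1} = 1 / 2)
    (hpair₁ : ∀ i j : Fin n, i ≠ j → ∀ a b : ℝ, (a = 1 ∨ a = -1) → (b = 1 ∨ b = -1) →
      σ₁ {s | s i = a ∧ s j = b} = 1 / 4)
    (hpair₂ : ∀ i j : Fin n, i ≠ j → ∀ a b : ℝ, (a = 1 ∨ a = -1) → (b = 1 ∨ b = -1) →
      σ₂ {s | s i = a ∧ s j = b} = 1 / 4)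
    (h g : Fin K) :
    1 - ENNReal.ofReal (32 * (∑ x, ∑ y, A x y ^ 2) / (K ^ 2 * φ ^ 2)) ≤
      sketchMeasure n K σ₁ σ₂
        {ω | |cartEntry n K (Matrix.diagonal d * A) h g ω| < φ / 4 ∧
             |cartEntry n K (A * Matrix.diagonal d) h g ω| < φ / 4} := by
  have := isProbabilityMeasure_uniformOn_isEquip hK hdvd
  have : IsProbabilityMeasure (sketchMeasure n K σ₁ σ₂) := by
    unfold sketchMeasure
    infer_instance
  have hrow := sketchMeasure_le_abs_cartEntry (B := Matrix.diagonal d * A) hK hdvd hval₁ hval₂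
    hpair₁ hpair₂ (A := A) (fun x y => by
      rcases hd x with hx | hx <;> simp [Matrix.diagonal_mul, hx, sq_nonneg]) h g hφ
  have hcol := sketchMeasure_le_abs_cartEntry (B := A * Matrix.diagonal d) hK hdvd hval₁ hval₂
    hpair₁ hpair₂ (A := A) (fun x y => by
      rcases hd y with hy | hy <;> simp [Matrix.mul_diagonal, hy, sq_nonneg]) h g hφ
  set good := {ω | |cartEntry n K (Matrix.diagonal d * A) h g ω| < φ / 4 ∧
    |cartEntry n K (A * Matrix.diagonal d) h g ω| < φ / 4} with hgood
  have hcover : (Set.univ : Set _) ⊆ good ∪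
      ({ω | φ / 4 ≤ |cartEntry n K (Matrix.diagonal d * A) h g ω|} ∪
        {ω | φ / 4 ≤ |cartEntry n K (A * Matrix.diagonal d) h g ω|}) := by
    intro ω _
    simp only [hgood, Set.mem_union, Set.mem_ofPred_eq, ← not_lt]
    tauto
  rw [tsub_le_iff_right]
  calc (1 : ℝ≥0∞) = sketchMeasure n K σ₁ σ₂ Set.univ := measure_univ.symm
    _ ≤ sketchMeasure n K σ₁ σ₂ good + (_ + _) :=
      (measure_mono hcover).trans <| (measure_union_le _ _).trans <|
        add_le_add le_rfl (measure_union_le _ _)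
    _ ≤ sketchMeasure n K σ₁ σ₂ good + (_ + _) :=
      add_le_add le_rfl (add_le_add hrow hcol)
    _ = _ := by
      rw [← ENNReal.ofReal_add (by positivity) (by positivity)]
      congr 2
      ring
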